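/- Let R be a commutative ring, 1 ≤ t ≤ h, A a t×h matrix over R, and B an h×h matrix over R. Then A·B = Σ_{k=0}^{h−1} (φ^k(μ(A))) ⊙ ((π^k(ζ(B)))_{0:t}), where · is matrix multiplication and (·)_{0:t} denotes the t×h submatrix consisting of rows 0 through t−1. -/

import Mathlib

/-- `μ(A)_{i,j} = A_{i, i+j mod h}` for a `t × h` matrix `A`. -/
def rectMu {t h : ℕ} {R : Type*} (A : Matrix (Fin t) (ZMod h) R) :
    Matrix (Fin t) (ZMod h) R :=
  fun i j => A i (((i : ℕ) : ZMod h) + j)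

/-- `φ(A)_{i,j} = A_{i, j+1 mod h}` for a `t × h` matrix `A`. -/
def rectPhi {t h : ℕ} {R : Type*} (A : Matrix (Fin t) (ZMod h) R) :
    Matrix (Fin t) (ZMod h) R :=
  fun i j => A i (j + 1)

/-- `ζ(B)_{i,j} = B_{i+j, j}` -/
def matZeta {h : ℕ} {R : Type*} (B : Matrix (ZMod h) (ZMod h) R) :
    Matrix (ZMod h) (ZMod h) R :=
  fun i j => B (i + j) j

/-- `π(B)_{i,j} = B_{i+1, j}` -/
def matPi {h : ℕ} {R : Type*} (B : Matrix (ZMod h) (ZMod h) R) :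
    Matrix (ZMod h) (ZMod h) R :=
  fun i j => B (i + 1) j

/-- `C_{0:t}` : the `t × h` submatrix of an `h × h` matrix `C` formed by rows
`0` through `t-1`. -/
def rows {t h : ℕ} {R : Type*} (C : Matrix (ZMod h) (ZMod h) R) :
    Matrix (Fin t) (ZMod h) R :=
  fun i j => C (((i : ℕ) : ZMod h)) j

theorem rectPhi_iter {t h : ℕ} {R : Type*} (k : ℕ) (A : Matrix (Fin t) (ZMod h) R)
    (i : Fin t) (j : ZMod h) : (rectPhi^[k] A) i j = A i (j + (k : ZMod h)) := by
  induction k generalizing A with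
  | zero => simp
  | succ k ih =>
    rw [Function.iterate_succ_apply, ih]
    simp only [rectPhi, Nat.cast_succ, add_assoc]

theorem matPi_iter {h : ℕ} {R : Type*} (k : ℕ) (B : Matrix (ZMod h) (ZMod h) R)
    (i j : ZMod h) : (matPi^[k] B) i j = B (i + (k : ZMod h)) j := by
  induction k generalizing B with
  | zero => simp
  | succ k ih =>
    rw [Function.iterate_succ_apply, ih]
    simp only [matPi, Nat.cast_succ, add_assoc]

theorem sum_range_zmod {h : ℕ} [NeZero h] {R : Type*} [CommRing R] (f : ZMod h → R) :
    ∑ k ∈ Finset.range h, f (k : ZMod h) = ∑ x, f x := by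
  refine Finset.sum_bij (fun k _ => (k : ZMod h)) (by simp) ?_ ?_ (by simp)
  · intro a ha b hb hab
    have := congrArg ZMod.val hab
    rwa [ZMod.val_cast_of_lt (Finset.mem_range.1 ha),
      ZMod.val_cast_of_lt (Finset.mem_range.1 hb)] at this
  · intro b _
    exact ⟨b.val, Finset.mem_range.2 (ZMod.val_lt b), ZMod.natCast_zmod_val b⟩

theorem stmt_16 (R : Type*) [CommRing R] (t h : ℕ) [NeZero h]
    (ht : 1 ≤ t) (hth : t ≤ h)
    (A : Matrix (Fin t) (ZMod h) R) (B : Matrix (ZMod h) (ZMod h) R) :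
    A * B = ∑ k ∈ Finset.range h,
      Matrix.hadamard (rectPhi^[k] (rectMu A)) (rows (matPi^[k] (matZeta B))) := by
  ext i j
  rw [Matrix.sum_apply, Matrix.mul_apply]
  simp only [Matrix.hadamard_apply, rectPhi_iter, rows, matPi_iter, rectMu, matZeta]
  rw [sum_range_zmod (fun x : ZMod h => A i (((i : ℕ) : ZMod h) + (j + x)) *
    B (((i : ℕ) : ZMod h) + x + j) j)]
  rw [← Equiv.sum_comp (Equiv.addLeft (((i : ℕ) : ZMod h) + j))]
  refine Finset.sum_congr rfl fun x _ => ?_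
  simp only [Equiv.coe_addLeft]
  rw [add_right_comm _ x j, add_assoc _ j x]
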